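/- Let (V*, h*) be a 4-dimensional Minkowski space of signature (3,1) with Kähler-Atiyah algebra (∧V*, ⋄). A polyform α ∈ ∧V* satisfies (π∘τ)(α) = -α, α ⋄ α = 0, α ⋄ u ⋄ α = 0 where u = α⁽¹⁾, and α ⋄ v ⋄ α = 4 (v ⋄ α)⁽⁰⁾ α for all v ∈ V* if and only if α = u + u ∧ l where (u, l) is a parabolic pair of one-forms: h*(u,u) = 0, h*(l,l) = 1, h*(u,l) = 0 and u ≠ 0, or α = 0. -/

import Mathlib

/-!
In a `3 + 1` splitting with timelike unit vector `t`, the condition `π(τ(α)) = -α` leaves only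
degrees one and two, `α = s t + u + E ⋄ t + ω ⋄ b` with `u`, `E`, `b` spatial and `ω` the spatial
volume element. The condition on `α ⋄ t ⋄ α` then reads
`s² + |u|² + |E|² + |b|² = 4 s²`, `s u = b × E`, `s E = u × b`, `s b = E × u`.
If `s = 0` this forces `α = 0`. Otherwise `u`, `E`, `b` are mutually orthogonal of length `|s|`, so
that `U = s t + u` is null, `L = -s⁻¹ E` is a unit vector orthogonal to `U`, and `α = U + U ⋄ L`.
Conversely, for a parabolic pair `U + U ⋄ L = (1 - L) ⋄ U` and `U ⋄ v ⋄ U = 2 h(U, v) U`, from which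
all the conditions follow.
-/

noncomputable section

instance : Invertible (2 : ℝ) := invertibleOfNonzero two_ne_zero

/-- The Minkowski bilinear form of "mostly plus" signature (3,1) on `ℝ⁴`. -/
def minkB : (Fin 4 → ℝ) →ₗ[ℝ] (Fin 4 → ℝ) →ₗ[ℝ] ℝ :=
  LinearMap.mk₂ ℝ (fun x y => x 0 * y 0 + x 1 * y 1 + x 2 * y 2 - x 3 * y 3)
    (by intro m₁ m₂ n; simp only [Pi.add_apply]; ring)
    (by intro c m n; simp only [Pi.smul_apply, smul_eq_mul]; ring)
    (by intro m n₁ n₂; simp only [Pi.add_apply]; ring)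
    (by intro c m n; simp only [Pi.smul_apply, smul_eq_mul]; ring)

/-- The Minkowski quadratic form `Q(θ) = h*(θ,θ)` of signature (3,1), so that the
Clifford relation is `θ ⋄ θ = h*(θ,θ)`. -/
def Qmink : QuadraticForm ℝ (Fin 4 → ℝ) := LinearMap.BilinMap.toQuadraticMap minkB

/-- The Kähler–Atiyah algebra `(∧V*, ⋄)` is modelled by the Clifford algebra of
`Qmink`; this is the symbol isomorphism identifying it with the exterior algebra
as a vector space. -/
def cliffToExt : CliffordAlgebra Qmink ≃ₗ[ℝ] ExteriorAlgebra ℝ (Fin 4 → ℝ) :=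
  CliffordAlgebra.equivExterior Qmink

/-- The degree-`k` component `α⁽ᵏ⁾` of a polyform. -/
def polyProj (k : ℕ) (x : CliffordAlgebra Qmink) : ExteriorAlgebra ℝ (Fin 4 → ℝ) :=
  ↑(DirectSum.decompose (fun i : ℕ => ⋀[ℝ]^i (Fin 4 → ℝ)) (cliffToExt x) k)

/-- The scalar part `α⁽⁰⁾` of a polyform, as a real number. -/
def scalarPart (x : CliffordAlgebra Qmink) : ℝ :=
  ExteriorAlgebra.algebraMapInv (cliffToExt x)

section

open CliffordAlgebra

section Symbol

variable {R M : Type*} [CommRing R] [AddCommGroup M] [Module R M]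

lemma algebraMapInv_ι (v : M) :
    ExteriorAlgebra.algebraMapInv (ExteriorAlgebra.ι R v) = 0 := by
  simp [ExteriorAlgebra.algebraMapInv]

variable {Q : QuadraticForm R M} [Invertible (2 : R)]

lemma equivExterior_ι (v : M) : equivExterior Q (ι Q v) = ExteriorAlgebra.ι R v :=
  changeForm_ι changeForm.associated_neg_proof v

lemma equivExterior_ι_mul (v : M) (x : CliffordAlgebra Q) :
    equivExterior Q (ι Q v * x) = ExteriorAlgebra.ι R v * equivExterior Q x +
      contractLeft (Q := 0) (QuadraticMap.associated Q v) (equivExterior Q x) := by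
  have contract_neg (y : CliffordAlgebra (0 : QuadraticForm R M)) :
      contractLeft (QuadraticMap.associated (-Q) v) y =
        -contractLeft (QuadraticMap.associated Q v) y := by
    rw [map_neg, LinearMap.neg_apply, map_neg, LinearMap.neg_apply]
  refine (changeForm_ι_mul changeForm.associated_neg_proof v x).trans ?_
  rw [contract_neg, sub_neg_eq_add]
  rfl

lemma equivExterior_ι_mul_ι (v w : M) :
    equivExterior Q (ι Q v * ι Q w) =
      ExteriorAlgebra.ι R v * ExteriorAlgebra.ι R w +
        algebraMap R _ (QuadraticMap.associated Q v w) := by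
  rw [equivExterior_ι_mul, equivExterior_ι]
  exact congrArg _ (contractLeft_ι (Q := 0) (QuadraticMap.associated Q v) w)

lemma equivExterior_symm_ι_add_ι_mul_ι {u l : M} (h : QuadraticMap.associated Q u l = 0) :
    (equivExterior Q).symm
        (ExteriorAlgebra.ι R u + ExteriorAlgebra.ι R u * ExteriorAlgebra.ι R l) =
      ι Q u + ι Q u * ι Q l := by
  rw [LinearEquiv.symm_apply_eq, map_add, equivExterior_ι, equivExterior_ι_mul_ι, h, map_zero,
    add_zero]

variable (Q) in
/-- The scalar part `x⁽⁰⁾` of an element of the Clifford algebra, read off from its image in the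
exterior algebra under the symbol isomorphism. -/
def symbolScalar : CliffordAlgebra Q →ₗ[R] R :=
  ExteriorAlgebra.algebraMapInv.toLinearMap ∘ₗ (equivExterior Q).toLinearMap

lemma symbolScalar_ι_mul_ι (v w : M) :
    symbolScalar Q (ι Q v * ι Q w) = QuadraticMap.associated Q v w := by
  change ExteriorAlgebra.algebraMapInv (equivExterior Q (ι Q v * ι Q w)) = _
  rw [equivExterior_ι_mul_ι, map_add, map_mul, algebraMapInv_ι, zero_mul, zero_add,
    ExteriorAlgebra.algebraMap_leftInverse]

lemma symbolScalar_ι_mul_ι_mul_ι (a b c : M) :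
    symbolScalar Q (ι Q a * (ι Q b * ι Q c)) = 0 := by
  change ExteriorAlgebra.algebraMapInv (equivExterior Q (ι Q a * (ι Q b * ι Q c))) = _
  have contract : contractLeft (Q := 0) (QuadraticMap.associated Q a)
        (ExteriorAlgebra.ι R b * ExteriorAlgebra.ι R c +
          algebraMap R _ (QuadraticMap.associated Q b c)) =
      QuadraticMap.associated Q a b • ExteriorAlgebra.ι R c -
        ExteriorAlgebra.ι R b * algebraMap R _ (QuadraticMap.associated Q a c) := by
    rw [map_add, contractLeft_algebraMap, add_zero]
    exact (contractLeft_ι_mul _ b _).trans (by rw [contractLeft_ι])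
  rw [equivExterior_ι_mul, equivExterior_ι_mul_ι, contract]
  simp [algebraMapInv_ι]

end Symbol

lemma decompose_ι_add_ι_mul_ι_one {R M : Type*} [CommRing R] [AddCommGroup M] [Module R M]
    (u l : M) :
    (DirectSum.decompose (fun i : ℕ => ⋀[R]^i M)
      (ExteriorAlgebra.ι R u + ExteriorAlgebra.ι R u * ExteriorAlgebra.ι R l) 1 :
        ExteriorAlgebra R M) = ExteriorAlgebra.ι R u := by
  have hu : ExteriorAlgebra.ι R u ∈ ⋀[R]^1 M := by simp [ExteriorAlgebra.exteriorPower]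
  have hul : ExteriorAlgebra.ι R u * ExteriorAlgebra.ι R l ∈ ⋀[R]^2 M := by
    rw [ExteriorAlgebra.exteriorPower, pow_two]
    exact Submodule.mul_mem_mul (LinearMap.mem_range_self _ u) (LinearMap.mem_range_self _ l)
  rw [DirectSum.decompose_add, DirectSum.add_apply, Submodule.coe_add,
    DirectSum.decompose_of_mem_same (fun i : ℕ => ⋀[R]^i M) hu,
    DirectSum.decompose_of_mem_ne (fun i : ℕ => ⋀[R]^i M) hul (by decide), add_zero]

section OrthogonalProducts

variable {R M κ : Type*} [CommRing R] [AddCommGroup M] [Module R M] {Q : QuadraticForm R M}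

lemma ι_mul_prod_of_forall_isOrtho {v : M} {l : List M} (h : ∀ w ∈ l, Q.IsOrtho v w) :
    ι Q v * (l.map (ι Q)).prod = (-1 : R) ^ l.length • ((l.map (ι Q)).prod * ι Q v) := by
  induction l with
  | nil => simp
  | cons w l ih =>
    rw [List.forall_mem_cons] at h
    rw [List.map_cons, List.prod_cons, ι_mul_ι_mul_of_isOrtho _ h.1, ih h.2, mul_smul_comm,
      List.length_cons, pow_succ', mul_smul, neg_one_smul, mul_assoc]

lemma reverse_prod_of_pairwise_isOrtho {l : List M} (h : l.Pairwise Q.IsOrtho) :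
    reverse (l.map (ι Q)).prod = (-1 : R) ^ l.length.choose 2 • (l.map (ι Q)).prod := by
  induction l with
  | nil => simp
  | cons w l ih =>
    rw [List.pairwise_cons] at h
    rw [List.map_cons, List.prod_cons, reverse.map_mul, reverse_ι, ih h.2, smul_mul_assoc,
      ι_mul_prod_of_forall_isOrtho h.1, List.length_cons, Nat.choose_succ_succ' l.length 1,
      Nat.choose_one_right, smul_smul, pow_add, mul_right_comm, ← pow_add, ← two_mul, pow_mul,
      neg_one_sq, one_pow, one_mul]

lemma involute_reverse_prod_of_pairwise_isOrtho {l : List M} (h : l.Pairwise Q.IsOrtho) :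
    involute (reverse (l.map (ι Q)).prod) =
      (-1 : R) ^ (l.length + 1).choose 2 • (l.map (ι Q)).prod := by
  rw [reverse_prod_of_pairwise_isOrtho h, map_smul, involute_prod_map_ι, smul_smul, ← pow_add,
    Nat.choose_succ_succ' l.length 1, Nat.choose_one_right, add_comm]

/-- The products of finitely many distinct members of the family `e`, in any order. -/
def distinctProducts (Q : QuadraticForm R M) (e : κ → M) : Set (CliffordAlgebra Q) :=
  {x | ∃ l : List κ, l.Nodup ∧ x = ((l.map e).map (ι Q)).prod}

variable {e : κ → M}

lemma ι_mul_mem_span_distinctProducts (he : Pairwise fun i j => Q.IsOrtho (e i) (e j)) (i : κ)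
    {x : CliffordAlgebra Q} (hx : x ∈ distinctProducts Q e) :
    ι Q (e i) * x ∈ Submodule.span R (distinctProducts Q e) := by
  obtain ⟨l, hl, rfl⟩ := hx
  by_cases hi : i ∈ l
  · obtain ⟨l₁, l₂, rfl⟩ := List.append_of_mem hi
    rw [List.nodup_middle, List.nodup_cons] at hl
    have hortho : ∀ w ∈ l₁.map e, Q.IsOrtho (e i) w := by
      rw [List.forall_mem_map]
      exact fun j hj => he fun hij => hl.1 (hij ▸ List.mem_append_left _ hj)
    have contract : ι Q (e i) * (((l₁ ++ i :: l₂).map e).map (ι Q)).prod =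
        ((-1) ^ (l₁.map e).length * Q (e i)) • (((l₁ ++ l₂).map e).map (ι Q)).prod := by
      simp only [List.map_append, List.map_cons, List.prod_append, List.prod_cons]
      rw [← mul_assoc, ι_mul_prod_of_forall_isOrtho hortho, smul_mul_assoc, mul_assoc,
        ← mul_assoc (ι Q (e i)), ι_sq_scalar, ← Algebra.smul_def, mul_smul_comm, smul_smul]
    rw [contract]
    exact Submodule.smul_mem _ _ (Submodule.subset_span ⟨_, hl.2, rfl⟩)
  · exact Submodule.subset_span ⟨i :: l, List.nodup_cons.2 ⟨hi, hl⟩, rfl⟩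

lemma span_distinctProducts_eq_top (he : Pairwise fun i j => Q.IsOrtho (e i) (e j))
    (hspan : Submodule.span R (Set.range e) = ⊤) :
    Submodule.span R (distinctProducts Q e) = ⊤ := by
  refine Submodule.eq_top_iff'.2 fun x => ?_
  induction x using CliffordAlgebra.left_induction with
  | algebraMap r =>
    rw [Algebra.algebraMap_eq_smul_one]
    exact Submodule.smul_mem _ _ (Submodule.subset_span ⟨[], List.nodup_nil, rfl⟩)
  | add x y hx hy => exact add_mem hx hy
  | ι_mul x v hx =>
    have hv : v ∈ Submodule.span R (Set.range e) := hspan ▸ Submodule.mem_top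
    have hvx : ι Q v * x ∈ (Submodule.span R (Set.range e)).map (ι Q) *
        Submodule.span R (distinctProducts Q e) :=
      Submodule.mul_mem_mul (Submodule.mem_map_of_mem hv) hx
    rw [Submodule.map_span, Submodule.span_mul_span] at hvx
    refine Submodule.span_le.2 ?_ hvx
    rintro _ ⟨_, ⟨_, ⟨i, rfl⟩, rfl⟩, y, hy, rfl⟩
    exact ι_mul_mem_span_distinctProducts he i hy

/-- The map `x ↦ x - π(τ(x))`; up to a factor `2`, the projection onto the elements with
`π(τ(x)) = -x`. -/
def antisymmetrization : CliffordAlgebra Q →ₗ[R] CliffordAlgebra Q :=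
  LinearMap.id - involute.toLinearMap ∘ₗ reverse

variable {S : Submodule R (CliffordAlgebra Q)}

lemma antisymmetrization_prod_mem (he : Pairwise fun i j => Q.IsOrtho (e i) (e j))
    (hvec : ∀ i, ι Q (e i) ∈ S) (hbivec : ∀ i j, i ≠ j → ι Q (e i) * ι Q (e j) ∈ S) {l : List κ}
    (hl : l.Nodup) (hlen : l.length ≤ 4) :
    antisymmetrization ((l.map e).map (ι Q)).prod ∈ S := by
  have hpair : (l.map e).Pairwise Q.IsOrtho := List.pairwise_map.2 (hl.imp fun h => he h)
  have eq_smul : antisymmetrization ((l.map e).map (ι Q)).prod =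
      (1 - (-1) ^ (l.length + 1).choose 2 : R) • ((l.map e).map (ι Q)).prod := by
    rw [sub_smul, one_smul, ← List.length_map (as := l) e,
      ← involute_reverse_prod_of_pairwise_isOrtho hpair]
    rfl
  rw [eq_smul]
  match l with
  | [i] => exact S.smul_mem _ (by simpa using hvec i)
  | [i, j] => exact S.smul_mem _ (by simpa using hbivec i j (by simpa using hl))
  | [] | [_, _, _] | [_, _, _, _] =>
    simp [Nat.choose_succ_succ', Even.neg_one_pow (show Even 6 by decide),
      Even.neg_one_pow (show Even 10 by decide)]

lemma mem_of_involute_reverse_eq_neg [Fintype κ] [Invertible (2 : R)]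
    (hκ : Fintype.card κ ≤ 4) (he : Pairwise fun i j => Q.IsOrtho (e i) (e j))
    (hspan : Submodule.span R (Set.range e) = ⊤) (hvec : ∀ i, ι Q (e i) ∈ S)
    (hbivec : ∀ i j, i ≠ j → ι Q (e i) * ι Q (e j) ∈ S) {x : CliffordAlgebra Q}
    (hx : involute (reverse x) = -x) :
    x ∈ S := by
  have two_smul_x : (2 : R) • x = antisymmetrization x := by
    simp [antisymmetrization, hx, two_smul]
  have hle : Submodule.span R (distinctProducts Q e) ≤ S.comap antisymmetrization := by
    refine Submodule.span_le.2 ?_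
    rintro _ ⟨l, hl, rfl⟩
    exact antisymmetrization_prod_mem he hvec hbivec hl (hl.length_le_card.trans hκ)
  rw [← invOf_smul_smul (2 : R) x, two_smul_x]
  exact S.smul_mem _ (hle (span_distinctProducts_eq_top he hspan ▸ Submodule.mem_top))

end OrthogonalProducts

section ParabolicPair

variable {R M : Type*} [CommRing R] [AddCommGroup M] [Module R M] {Q : QuadraticForm R M} {u l : M}

lemma ι_add_ι_mul_ι_eq_mul_ι (hul : Q.IsOrtho u l) :
    ι Q u + ι Q u * ι Q l = (1 - ι Q l) * ι Q u := by
  rw [ι_mul_ι_comm_of_isOrtho hul, sub_mul, one_mul, sub_eq_add_neg]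

lemma involute_reverse_ι_add_ι_mul_ι (hul : Q.IsOrtho u l) :
    involute (reverse (ι Q u + ι Q u * ι Q l)) = -(ι Q u + ι Q u * ι Q l) := by
  rw [map_add, map_add, reverse.map_mul, map_mul, reverse_ι, reverse_ι, involute_ι, involute_ι,
    neg_mul_neg, ι_mul_ι_comm_of_isOrtho hul.symm, neg_add]

lemma ι_add_ι_mul_ι_mul_ι_mul_self (hu : Q u = 0) (hl : Q l = 1) (hul : Q.IsOrtho u l) (v : M) :
    (ι Q u + ι Q u * ι Q l) * ι Q v * (ι Q u + ι Q u * ι Q l) =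
      (2 * QuadraticMap.polar Q u v) • (ι Q u + ι Q u * ι Q l) := by
  have u_mul_v_mul_u : ι Q u * ι Q v * ι Q u = QuadraticMap.polar Q u v • ι Q u := by
    rw [ι_mul_ι_mul_ι, hu, zero_smul, sub_zero, map_smul]
  have sandwich_u : (ι Q u + ι Q u * ι Q l) * (1 + ι Q l) =
      (2 : R) • (ι Q u + ι Q u * ι Q l) := by
    rw [add_mul, mul_add, mul_add, mul_assoc (ι Q u) (ι Q l) (ι Q l), ι_sq_scalar, hl, map_one]
    simp only [mul_one]
    module
  calc (ι Q u + ι Q u * ι Q l) * ι Q v * (ι Q u + ι Q u * ι Q l)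
      = (1 - ι Q l) * ι Q u * ι Q v * (ι Q u * (1 + ι Q l)) := by
        rw [← ι_add_ι_mul_ι_eq_mul_ι hul, mul_add (ι Q u) 1, mul_one]
    _ = (1 - ι Q l) * (ι Q u * ι Q v * ι Q u) * (1 + ι Q l) := by simp only [mul_assoc]
    _ = QuadraticMap.polar Q u v • ((ι Q u + ι Q u * ι Q l) * (1 + ι Q l)) := by
        rw [u_mul_v_mul_u, mul_smul_comm, smul_mul_assoc, ι_add_ι_mul_ι_eq_mul_ι hul]
    _ = (2 * QuadraticMap.polar Q u v) • (ι Q u + ι Q u * ι Q l) := by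
        rw [sandwich_u, smul_smul, mul_comm]

lemma ι_add_ι_mul_ι_mul_self (hu : Q u = 0) (hul : Q.IsOrtho u l) :
    (ι Q u + ι Q u * ι Q l) * (ι Q u + ι Q u * ι Q l) = 0 := by
  calc (ι Q u + ι Q u * ι Q l) * (ι Q u + ι Q u * ι Q l)
      = (1 - ι Q l) * ι Q u * (ι Q u * (1 + ι Q l)) := by
        rw [← ι_add_ι_mul_ι_eq_mul_ι hul, mul_add (ι Q u) 1, mul_one]
    _ = (1 - ι Q l) * (ι Q u * ι Q u) * (1 + ι Q l) := by simp only [mul_assoc]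
    _ = 0 := by rw [ι_sq_scalar, hu, map_zero, mul_zero, zero_mul]

lemma symbolScalar_ι_mul_ι_add_ι_mul_ι [Invertible (2 : R)] (v : M) :
    symbolScalar Q (ι Q v * (ι Q u + ι Q u * ι Q l)) = QuadraticMap.associated Q v u := by
  rw [mul_add, map_add, symbolScalar_ι_mul_ι, symbolScalar_ι_mul_ι_mul_ι, add_zero]

end ParabolicPair

lemma polar_eq_two_mul_associated {R M : Type*} [CommRing R] [AddCommGroup M] [Module R M]
    [Invertible (2 : R)] (Q : QuadraticForm R M) (u v : M) :
    QuadraticMap.polar Q u v = 2 * QuadraticMap.associated Q u v := by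
  simpa [two_mul, two_smul] using
    (LinearMap.congr_fun₂ (QuadraticMap.two_nsmul_associated R Q) u v).symm

lemma eq_zero_of_add_eq_zero_of_sub_eq_zero (R : Type*) {N : Type*} [Ring R] [Invertible (2 : R)]
    [AddCommGroup N] [Module R N] {x y : N} (hadd : x + y = 0) (hsub : x - y = 0) :
    x = 0 ∧ y = 0 := by
  have hxy : x = y := sub_eq_zero.1 hsub
  have hy : y = 0 := by
    rw [hxy] at hadd
    rw [← invOf_smul_smul (2 : R) y, two_smul, hadd, smul_zero]
  exact ⟨hxy.trans hy, hy⟩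

section LorentzFrame

open Matrix

variable {R M : Type*} [CommRing R] [AddCommGroup M] [Module R M] {Q : QuadraticForm R M}

variable (Q) in
/-- An orthonormal frame of signature `(3,1)`: the vectors `e 0`, `e 1`, `e 2` are spacelike and
`e 3` is timelike. -/
def IsLorentzFrame [Invertible (2 : R)] (e : Fin 4 → M) : Prop :=
  ∀ i j, QuadraticMap.associated Q (e i) (e j) = diagonal ![1, 1, 1, -1] i j

/-- The vector with the given components along the first three members of a frame. -/
def spatialVector (e : Fin 4 → M) : (Fin 3 → R) →ₗ[R] M :=
  Fintype.linearCombination R fun i : Fin 3 => e i.castSucc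

variable (Q) in
/-- The spatial vector with the given components, as an element of the Clifford algebra. In analogy
with `p ↦ p · σ` for the Pauli matrices, products of these elements are governed by the dot and the
cross product. -/
def pauli (e : Fin 4 → M) : (Fin 3 → R) →ₗ[R] CliffordAlgebra Q :=
  ι Q ∘ₗ spatialVector e

variable (Q) in
/-- The spatial volume element `e₀ ⋄ e₁ ⋄ e₂`. -/
def spatialVolume (e : Fin 4 → M) : CliffordAlgebra Q :=
  ι Q (e 0) * ι Q (e 1) * ι Q (e 2)

variable (Q) in
/-- The general element of degrees one and two in a `3 + 1` splitting: the vector with temporal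
component `s` and spatial component `u`, plus the bivector with electric component `E` and magnetic
component `b`. -/
def vectorBivector (e : Fin 4 → M) :
    (R × (Fin 3 → R)) × (Fin 3 → R) × (Fin 3 → R) →ₗ[R] CliffordAlgebra Q :=
  ((LinearMap.toSpanSingleton R _ (ι Q (e 3))).coprod (pauli Q e)).coprod
    ((LinearMap.mulRight R (ι Q (e 3)) ∘ₗ pauli Q e).coprod
      (LinearMap.mulLeft R (spatialVolume Q e) ∘ₗ pauli Q e))

variable {e : Fin 4 → M}

lemma vectorBivector_apply (s : R) (u E b : Fin 3 → R) :
    vectorBivector Q e ((s, u), E, b) = s • ι Q (e 3) + pauli Q e u +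
      (pauli Q e E * ι Q (e 3) + spatialVolume Q e * pauli Q e b) := rfl

lemma spatialVector_apply (p : Fin 3 → R) :
    spatialVector e p = p 0 • e 0 + p 1 • e 1 + p 2 • e 2 := by
  simp [spatialVector, Fintype.linearCombination_apply, Fin.sum_univ_three]

lemma pauli_apply (p : Fin 3 → R) :
    pauli Q e p = p 0 • ι Q (e 0) + p 1 • ι Q (e 1) + p 2 • ι Q (e 2) := by
  simp only [pauli, LinearMap.comp_apply, spatialVector_apply, map_add, map_smul]

lemma involute_pauli (p : Fin 3 → R) : involute (pauli Q e p) = -pauli Q e p :=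
  involute_ι _

lemma involute_spatialVolume : involute (spatialVolume Q e) = -spatialVolume Q e := by
  simp only [spatialVolume, map_mul, involute_ι, neg_mul, mul_neg, neg_neg]

namespace IsLorentzFrame

variable [Invertible (2 : R)]

lemma isOrtho (he : IsLorentzFrame Q e) {i j : Fin 4} (hij : i ≠ j) : Q.IsOrtho (e i) (e j) := by
  rw [← QuadraticMap.associated_isOrtho, he, diagonal_apply_ne _ hij]

lemma ι_mul_ι_comm (he : IsLorentzFrame Q e) {i j : Fin 4} (hij : i ≠ j) :
    ι Q (e i) * ι Q (e j) = -(ι Q (e j) * ι Q (e i)) :=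
  ι_mul_ι_comm_of_isOrtho (he.isOrtho hij)

lemma ι_mul_self (he : IsLorentzFrame Q e) (i : Fin 4) :
    ι Q (e i) * ι Q (e i) = algebraMap R _ ((![1, 1, 1, -1] : Fin 4 → R) i) := by
  rw [ι_sq_scalar, ← QuadraticMap.associated_eq_self_apply R, he, diagonal_apply_eq]

lemma ι_mul_self_of_ne_three (he : IsLorentzFrame Q e) {i : Fin 4} (hi : i ≠ 3) :
    ι Q (e i) * ι Q (e i) = 1 := by
  rw [he.ι_mul_self]
  fin_cases i <;> simp_all

lemma commute_ι_ι_mul_ι (he : IsLorentzFrame Q e) {i j k : Fin 4} (hij : i ≠ j) (hik : i ≠ k) :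
    Commute (ι Q (e i)) (ι Q (e j) * ι Q (e k)) := by
  have := ι_mul_prod_of_forall_isOrtho (Q := Q) (v := e i) (l := [e j, e k])
    (by simp [he.isOrtho hij, he.isOrtho hik])
  simpa [Commute, SemiconjBy] using this

lemma spatialVolume_eq_one_two_zero (he : IsLorentzFrame Q e) :
    spatialVolume Q e = ι Q (e 1) * (ι Q (e 2) * ι Q (e 0)) := by
  rw [spatialVolume, mul_assoc, (he.commute_ι_ι_mul_ι (by decide) (by decide)).eq, mul_assoc]

lemma spatialVolume_eq_two_zero_one (he : IsLorentzFrame Q e) :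
    spatialVolume Q e = ι Q (e 2) * (ι Q (e 0) * ι Q (e 1)) := by
  rw [spatialVolume, (he.commute_ι_ι_mul_ι (by decide) (by decide)).eq]

lemma commute_spatialVolume_ι (he : IsLorentzFrame Q e) {i : Fin 4} (hi : i ≠ 3) :
    Commute (spatialVolume Q e) (ι Q (e i)) := by
  fin_cases i
  · rw [spatialVolume, mul_assoc]
    exact ((Commute.refl _).mul_right (he.commute_ι_ι_mul_ι (by decide) (by decide))).symm
  · rw [he.spatialVolume_eq_one_two_zero]
    exact ((Commute.refl _).mul_right (he.commute_ι_ι_mul_ι (by decide) (by decide))).symm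
  · rw [he.spatialVolume_eq_two_zero_one]
    exact ((Commute.refl _).mul_right (he.commute_ι_ι_mul_ι (by decide) (by decide))).symm
  · exact absurd rfl hi

lemma commute_spatialVolume_pauli (he : IsLorentzFrame Q e) (p : Fin 3 → R) :
    Commute (spatialVolume Q e) (pauli Q e p) := by
  rw [pauli_apply]
  exact (((he.commute_spatialVolume_ι (by decide)).smul_right _).add_right
    ((he.commute_spatialVolume_ι (by decide)).smul_right _)).add_right
    ((he.commute_spatialVolume_ι (by decide)).smul_right _)

lemma spatialVolume_mul_ι_zero (he : IsLorentzFrame Q e) :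
    spatialVolume Q e * ι Q (e 0) = ι Q (e 1) * ι Q (e 2) := by
  rw [(he.commute_spatialVolume_ι (by decide)).eq, spatialVolume, mul_assoc, ← mul_assoc,
    he.ι_mul_self_of_ne_three (by decide), one_mul]

lemma spatialVolume_mul_ι_one (he : IsLorentzFrame Q e) :
    spatialVolume Q e * ι Q (e 1) = ι Q (e 2) * ι Q (e 0) := by
  rw [(he.commute_spatialVolume_ι (by decide)).eq, he.spatialVolume_eq_one_two_zero, ← mul_assoc,
    he.ι_mul_self_of_ne_three (by decide), one_mul]

lemma spatialVolume_mul_ι_two (he : IsLorentzFrame Q e) :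
    spatialVolume Q e * ι Q (e 2) = ι Q (e 0) * ι Q (e 1) := by
  rw [spatialVolume, mul_assoc, he.ι_mul_self_of_ne_three (by decide), mul_one]

lemma spatialVolume_mul_pauli (he : IsLorentzFrame Q e) (p : Fin 3 → R) :
    spatialVolume Q e * pauli Q e p = p 0 • (ι Q (e 1) * ι Q (e 2)) +
      p 1 • (ι Q (e 2) * ι Q (e 0)) + p 2 • (ι Q (e 0) * ι Q (e 1)) := by
  simp only [pauli_apply, mul_add, mul_smul_comm, he.spatialVolume_mul_ι_zero,
    he.spatialVolume_mul_ι_one, he.spatialVolume_mul_ι_two]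

lemma pauli_mul_pauli (he : IsLorentzFrame Q e) (p q : Fin 3 → R) :
    pauli Q e p * pauli Q e q =
      algebraMap R _ (p ⬝ᵥ q) + spatialVolume Q e * pauli Q e (p ⨯₃ q) := by
  have s0 := he.ι_mul_self_of_ne_three (i := 0) (by decide)
  have s1 := he.ι_mul_self_of_ne_three (i := 1) (by decide)
  have s2 := he.ι_mul_self_of_ne_three (i := 2) (by decide)
  rw [he.spatialVolume_mul_pauli, Algebra.algebraMap_eq_smul_one, vec3_dotProduct]
  simp only [pauli_apply, mul_add, add_mul, smul_mul_assoc, mul_smul_comm, s0, s1, s2,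
    cross_apply, cons_val]
  rw [he.ι_mul_ι_comm (i := 1) (j := 0) (by decide), he.ι_mul_ι_comm (i := 2) (j := 1) (by decide),
    he.ι_mul_ι_comm (i := 0) (j := 2) (by decide)]
  module

lemma spatialVolume_mul_self (he : IsLorentzFrame Q e) :
    spatialVolume Q e * spatialVolume Q e = -1 := by
  calc spatialVolume Q e * spatialVolume Q e
      = spatialVolume Q e * ι Q (e 0) * (ι Q (e 1) * ι Q (e 2)) := by
        rw [mul_assoc, ← mul_assoc (ι Q (e 0)), ← spatialVolume]
    _ = ι Q (e 1) * (ι Q (e 2) * ι Q (e 1)) * ι Q (e 2) := by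
        rw [he.spatialVolume_mul_ι_zero]
        simp only [mul_assoc]
    _ = -1 := by
        rw [he.ι_mul_ι_comm (by decide), mul_neg, ← mul_assoc,
          he.ι_mul_self_of_ne_three (by decide), one_mul, neg_mul,
          he.ι_mul_self_of_ne_three (by decide)]

lemma ι_three_mul_self (he : IsLorentzFrame Q e) : ι Q (e 3) * ι Q (e 3) = -1 := by
  simpa using he.ι_mul_self 3

lemma ι_three_mul_pauli (he : IsLorentzFrame Q e) (p : Fin 3 → R) :
    ι Q (e 3) * pauli Q e p = -(pauli Q e p * ι Q (e 3)) := by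
  simp only [pauli_apply, mul_add, add_mul, mul_smul_comm, smul_mul_assoc,
    he.ι_mul_ι_comm (i := 3) (j := 0) (by decide), he.ι_mul_ι_comm (i := 3) (j := 1) (by decide),
    he.ι_mul_ι_comm (i := 3) (j := 2) (by decide), smul_neg, neg_add]

lemma ι_three_mul_spatialVolume (he : IsLorentzFrame Q e) :
    ι Q (e 3) * spatialVolume Q e = -(spatialVolume Q e * ι Q (e 3)) := by
  have := ι_mul_prod_of_forall_isOrtho (Q := Q) (v := e 3) (l := [e 0, e 1, e 2])
    (by simp [he.isOrtho (show (3 : Fin 4) ≠ 0 by decide),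
      he.isOrtho (show (3 : Fin 4) ≠ 1 by decide), he.isOrtho (show (3 : Fin 4) ≠ 2 by decide)])
  simpa [spatialVolume, mul_assoc, pow_succ] using this

lemma pauli_mul_pauli_sub_swap (he : IsLorentzFrame Q e) (p q : Fin 3 → R) :
    pauli Q e p * pauli Q e q - pauli Q e q * pauli Q e p =
      (2 : R) • (spatialVolume Q e * pauli Q e (p ⨯₃ q)) := by
  rw [he.pauli_mul_pauli, he.pauli_mul_pauli, dotProduct_comm q, ← cross_anticomm p q,
    map_neg, mul_neg]
  module

lemma pauli_mul_self (he : IsLorentzFrame Q e) (p : Fin 3 → R) :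
    pauli Q e p * pauli Q e p = algebraMap R _ (p ⬝ᵥ p) := by
  rw [he.pauli_mul_pauli, cross_self, map_zero, mul_zero, add_zero]

lemma ι_three_mul_spatialVolume_mul_pauli (he : IsLorentzFrame Q e) (p : Fin 3 → R) :
    ι Q (e 3) * (spatialVolume Q e * pauli Q e p) =
      spatialVolume Q e * pauli Q e p * ι Q (e 3) := by
  rw [← mul_assoc, he.ι_three_mul_spatialVolume, neg_mul, mul_assoc, he.ι_three_mul_pauli,
    mul_neg, neg_neg, mul_assoc]

lemma ι_three_mul_pauli_mul_ι_three (he : IsLorentzFrame Q e) (p : Fin 3 → R) :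
    ι Q (e 3) * (pauli Q e p * ι Q (e 3)) = pauli Q e p := by
  rw [← mul_assoc, he.ι_three_mul_pauli, neg_mul, mul_assoc, he.ι_three_mul_self, mul_neg_one,
    neg_neg]

lemma spatialVolume_mul_pauli_mul_self (he : IsLorentzFrame Q e) (p : Fin 3 → R) :
    spatialVolume Q e * pauli Q e p * (spatialVolume Q e * pauli Q e p) =
      -algebraMap R _ (p ⬝ᵥ p) := by
  rw [(he.commute_spatialVolume_pauli p).symm.mul_mul_mul_comm, he.spatialVolume_mul_self,
    he.pauli_mul_self, neg_one_mul]

lemma pauli_mul_spatialVolume_mul_pauli_sub_swap (he : IsLorentzFrame Q e) (p q : Fin 3 → R) :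
    pauli Q e p * (spatialVolume Q e * pauli Q e q) -
      spatialVolume Q e * pauli Q e q * pauli Q e p = -(2 : R) • pauli Q e (p ⨯₃ q) := by
  rw [← mul_assoc, ← (he.commute_spatialVolume_pauli p).eq, mul_assoc, mul_assoc, ← mul_sub,
    he.pauli_mul_pauli_sub_swap, mul_smul_comm, ← mul_assoc, he.spatialVolume_mul_self,
    neg_one_mul, smul_neg, neg_smul]

lemma symbolScalar_ι_three_mul_vectorBivector (he : IsLorentzFrame Q e) (s : R)
    (u E b : Fin 3 → R) :
    symbolScalar Q (ι Q (e 3) * vectorBivector Q e ((s, u), E, b)) = -s := by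
  rw [vectorBivector_apply, mul_add, mul_add, mul_add, he.spatialVolume_mul_pauli]
  simp [pauli_apply, mul_add, add_mul, -ι_sq_scalar, symbolScalar_ι_mul_ι,
    symbolScalar_ι_mul_ι_mul_ι, he 3 0, he 3 1, he 3 2, he 3 3]

lemma vectorBivector_mul_ι_three (he : IsLorentzFrame Q e) (s : R) (u E b : Fin 3 → R) :
    vectorBivector Q e ((s, u), E, b) * ι Q (e 3) =
      (pauli Q e u + spatialVolume Q e * pauli Q e b) * ι Q (e 3) - (s • 1 + pauli Q e E) := by
  simp only [vectorBivector_apply, add_mul, smul_mul_assoc, mul_assoc (pauli Q e E),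
    he.ι_three_mul_self, mul_neg_one, smul_neg]
  abel

lemma ι_three_mul_vectorBivector (he : IsLorentzFrame Q e) (s : R) (u E b : Fin 3 → R) :
    ι Q (e 3) * vectorBivector Q e ((s, u), E, b) =
      (spatialVolume Q e * pauli Q e b - pauli Q e u) * ι Q (e 3) + (pauli Q e E - s • 1) := by
  simp only [vectorBivector_apply, mul_add, mul_smul_comm, he.ι_three_mul_pauli,
    he.ι_three_mul_self, he.ι_three_mul_pauli_mul_ι_three,
    he.ι_three_mul_spatialVolume_mul_pauli, sub_mul, smul_neg]
  abel

lemma vectorBivector_mul_ι_three_mul_self (he : IsLorentzFrame Q e) (s : R)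
    (u E b : Fin 3 → R) :
    vectorBivector Q e ((s, u), E, b) * ι Q (e 3) * vectorBivector Q e ((s, u), E, b) =
      vectorBivector Q e
        ((-(s * s + u ⬝ᵥ u + E ⬝ᵥ E + b ⬝ᵥ b), (2 : R) • (E ⨯₃ b - s • u)),
          (2 : R) • (b ⨯₃ u - s • E), (2 : R) • (u ⨯₃ E - s • b)) := by
  set t := ι Q (e 3)
  set P := pauli Q e u
  set F := pauli Q e E
  set W := spatialVolume Q e * pauli Q e b
  set α := vectorBivector Q e ((s, u), E, b)
  have α_eq : α = s • t + P + (F * t + W) := vectorBivector_apply s u E b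
  have t_mul_α : t * α = (W - P) * t + (F - s • 1) := he.ι_three_mul_vectorBivector s u E b
  calc α * t * α = (P + W) * (t * α) - (s • 1 + F) * α := by
        rw [he.vectorBivector_mul_ι_three, sub_mul, mul_assoc]
    _ = ((P * W - W * P) + W * W - P * P - F * F - (s * s) • 1 - (2 * s) • F) * t +
          ((P * F - F * P) - (F * W - W * F) - (2 * s) • (P + W)) := by
      rw [t_mul_α, α_eq]
      simp only [mul_add, add_mul, mul_sub, sub_mul, smul_mul_assoc, mul_smul_comm, one_mul,
        mul_one, mul_assoc]
      module
    _ = _ := by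
      rw [he.pauli_mul_spatialVolume_mul_pauli_sub_swap u b,
        he.pauli_mul_spatialVolume_mul_pauli_sub_swap E b,
        he.pauli_mul_pauli_sub_swap u E, he.pauli_mul_self, he.pauli_mul_self,
        he.spatialVolume_mul_pauli_mul_self, vectorBivector_apply, ← cross_anticomm u b]
      simp only [Algebra.algebraMap_eq_smul_one, map_sub, map_smul, map_neg, mul_sub, add_mul,
        sub_mul, mul_smul_comm, smul_mul_assoc, neg_mul, one_mul, P, F, W, t]
      module

lemma eq_zero_of_smul_ι_three_add_pauli_eq_zero (he : IsLorentzFrame Q e) {s : R}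
    {u : Fin 3 → R} (h : s • ι Q (e 3) + pauli Q e u = 0) : s = 0 ∧ u = 0 := by
  have component_eq_zero (i : Fin 4) :
      symbolScalar Q (ι Q (e i) * (s • ι Q (e 3) + pauli Q e u)) = 0 := by
    rw [h, mul_zero, map_zero]
  simp only [pauli_apply, mul_add, mul_smul_comm, map_add, map_smul, symbolScalar_ι_mul_ι, he _ _]
    at component_eq_zero
  refine ⟨by simpa using component_eq_zero 3, ?_⟩
  ext i
  fin_cases i
  · simpa using component_eq_zero 0
  · simpa using component_eq_zero 1
  · simpa using component_eq_zero 2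

lemma pauli_injective (he : IsLorentzFrame Q e) : Function.Injective (pauli Q e) :=
  (injective_iff_map_eq_zero _).2 fun _ hu =>
    (he.eq_zero_of_smul_ι_three_add_pauli_eq_zero (s := 0) (by rw [hu, zero_smul, zero_add])).2

lemma vectorBivector_injective (he : IsLorentzFrame Q e) :
    Function.Injective (vectorBivector Q e) := by
  refine (injective_iff_map_eq_zero _).2 ?_
  rintro ⟨⟨s, u⟩, E, b⟩ h
  rw [vectorBivector_apply] at h
  set vector := s • ι Q (e 3) + pauli Q e u
  set electric := pauli Q e E * ι Q (e 3)
  set magnetic := spatialVolume Q e * pauli Q e b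
  have bivector_sub_vector : electric + magnetic - vector = 0 := by
    rw [← map_zero involute, ← h]
    simp only [vector, electric, magnetic, map_add, map_smul, map_mul, involute_ι, involute_pauli,
      involute_spatialVolume, neg_mul_neg, smul_neg]
    abel
  obtain ⟨bivector_eq_zero, vector_eq_zero⟩ :=
    eq_zero_of_add_eq_zero_of_sub_eq_zero R (by rwa [add_comm]) bivector_sub_vector
  have electric_sub_magnetic : electric - magnetic = 0 := by
    have := congrArg (fun x => ι Q (e 3) * x * ι Q (e 3)) bivector_eq_zero
    simpa [mul_add, add_mul, electric, magnetic, he.ι_three_mul_pauli_mul_ι_three,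
      he.ι_three_mul_spatialVolume_mul_pauli, mul_assoc, he.ι_three_mul_self, -ι_sq_scalar,
      sub_eq_add_neg] using this
  obtain ⟨electric_eq_zero, magnetic_eq_zero⟩ :=
    eq_zero_of_add_eq_zero_of_sub_eq_zero R bivector_eq_zero electric_sub_magnetic
  obtain ⟨rfl, rfl⟩ := he.eq_zero_of_smul_ι_three_add_pauli_eq_zero vector_eq_zero
  have E_eq_zero : E = 0 := he.pauli_injective <| by
    rw [map_zero, ← he.ι_three_mul_pauli_mul_ι_three,
      show pauli Q e E * ι Q (e 3) = 0 from electric_eq_zero, mul_zero]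
  have b_eq_zero : b = 0 := he.pauli_injective <| by
    rw [map_zero, ← neg_eq_zero, ← neg_one_mul, ← he.spatialVolume_mul_self, mul_assoc,
      show spatialVolume Q e * pauli Q e b = 0 from magnetic_eq_zero, mul_zero]
  rw [E_eq_zero, b_eq_zero]
  rfl

lemma mem_range_vectorBivector (he : IsLorentzFrame Q e)
    (hspan : Submodule.span R (Set.range e) = ⊤) {x : CliffordAlgebra Q}
    (hx : involute (reverse x) = -x) : x ∈ LinearMap.range (vectorBivector Q e) := by
  have pauli_single (i : Fin 3) : pauli Q e (Pi.single i 1) = ι Q (e i.castSucc) := by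
    simp [pauli, spatialVector]
  refine mem_of_involute_reverse_eq_neg (by simp) (fun i j hij => he.isOrtho hij) hspan ?_ ?_ hx
  · intro i
    induction i using Fin.lastCases with
    | last => exact ⟨((1, 0), 0, 0), by simp [vectorBivector_apply]⟩
    | cast i => exact ⟨((0, Pi.single i 1), 0, 0), by simp [vectorBivector_apply, pauli_single]⟩
  · intro i j hij
    induction i using Fin.lastCases with
    | last =>
      induction j using Fin.lastCases with
      | last => exact absurd rfl hij
      | cast j =>
        refine ⟨((0, 0), -Pi.single j 1, 0), ?_⟩
        simpa [vectorBivector_apply, pauli_single] using (he.ι_mul_ι_comm hij).symm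
    | cast i =>
      induction j using Fin.lastCases with
      | last => exact ⟨((0, 0), Pi.single i 1, 0), by simp [vectorBivector_apply, pauli_single]⟩
      | cast j =>
        refine ⟨((0, 0), 0, Pi.single i 1 ⨯₃ Pi.single j 1), ?_⟩
        have hne : j ≠ i := fun h => hij (h ▸ rfl)
        simp [vectorBivector_apply, ← pauli_single, he.pauli_mul_pauli, hne]

lemma exists_vectorBivector_eq (he : IsLorentzFrame Q e)
    (hspan : Submodule.span R (Set.range e) = ⊤) {α : CliffordAlgebra Q}
    (hα : involute (reverse α) = -α)
    (hsandwich : α * ι Q (e 3) * α = (4 * symbolScalar Q (ι Q (e 3) * α)) • α) :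
    ∃ (s : R) (u E b : Fin 3 → R), α = vectorBivector Q e ((s, u), E, b) ∧
      s * s + u ⬝ᵥ u + E ⬝ᵥ E + b ⬝ᵥ b = 4 * (s * s) ∧
      s • u = b ⨯₃ E ∧ s • E = u ⨯₃ b ∧ s • b = E ⨯₃ u := by
  obtain ⟨⟨⟨s, u⟩, E, b⟩, rfl⟩ := he.mem_range_vectorBivector hspan hα
  rw [he.vectorBivector_mul_ι_three_mul_self, he.symbolScalar_ι_three_mul_vectorBivector,
    ← map_smul] at hsandwich
  have components := he.vectorBivector_injective hsandwich
  simp only [Prod.smul_mk, Prod.mk.injEq, smul_eq_mul] at components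
  obtain ⟨⟨hs, hu⟩, hE, hb⟩ := components
  have smul_eq_of_two_smul {p q r : Fin 3 → R} (h : (2 : R) • (p ⨯₃ q - s • r) = (4 * -s) • r) :
    s • r = q ⨯₃ p := by
    rw [← cross_anticomm]
    ext i
    have h_i := congrFun h i
    simp only [Pi.smul_apply, Pi.sub_apply, Pi.neg_apply, smul_eq_mul] at h_i ⊢
    linear_combination ⅟2 * h_i - ((p ⨯₃ q) i + s * r i) * invOf_mul_self (2 : R)
  exact ⟨s, u, E, b, rfl, by linear_combination -hs, smul_eq_of_two_smul hu,
    smul_eq_of_two_smul hE, smul_eq_of_two_smul hb⟩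

lemma associated_spatialVector (he : IsLorentzFrame Q e) (u u' : Fin 3 → R) :
    QuadraticMap.associated Q (spatialVector e u) (spatialVector e u') = u ⬝ᵥ u' := by
  simp [spatialVector_apply, he _ _, vec3_dotProduct]

lemma associated_three_spatialVector (he : IsLorentzFrame Q e) (u : Fin 3 → R) :
    QuadraticMap.associated Q (e 3) (spatialVector e u) = 0 := by
  simp [spatialVector_apply, he _ _]

lemma associated_smul_three_add_spatialVector (he : IsLorentzFrame Q e) (s s' : R)
    (u u' : Fin 3 → R) :
    QuadraticMap.associated Q (s • e 3 + spatialVector e u) (s' • e 3 + spatialVector e u') =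
      u ⬝ᵥ u' - s * s' := by
  have associated_spatialVector_three :
      QuadraticMap.associated Q (spatialVector e u) (e 3) = 0 := by
    simp [spatialVector_apply, he _ _]
  simp only [map_add, map_smul, LinearMap.add_apply, LinearMap.smul_apply, smul_eq_mul,
    he.associated_spatialVector, he.associated_three_spatialVector,
    associated_spatialVector_three, show QuadraticMap.associated Q (e 3) (e 3) = -1 from he 3 3]
  ring

lemma vectorBivector_eq_ι_add_ι_mul_ι {K : Type*} [Field K] [Invertible (2 : K)] [Module K M]
    {Q : QuadraticForm K M} (he : IsLorentzFrame Q e) {s : K} (hs : s ≠ 0)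
    {u E b : Fin 3 → K} (orth : u ⬝ᵥ E = 0) (hb : s • b = E ⨯₃ u) :
    vectorBivector Q e ((s, u), E, b) =
      ι Q (s • e 3 + spatialVector e u) +
        ι Q (s • e 3 + spatialVector e u) * ι Q (spatialVector e (-s⁻¹ • E)) := by
  have temporal_mul : s • ι Q (e 3) * pauli Q e (-s⁻¹ • E) = pauli Q e E * ι Q (e 3) := by
    rw [map_smul, mul_smul_comm, smul_mul_assoc, smul_smul, he.ι_three_mul_pauli, neg_mul,
      inv_mul_cancel₀ hs, neg_one_smul, neg_neg]
  have spatial_mul : pauli Q e u * pauli Q e (-s⁻¹ • E) = spatialVolume Q e * pauli Q e b := by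
    have hcross : u ⨯₃ (-s⁻¹ • E) = b := by
      rw [map_smul, neg_smul, ← smul_neg, cross_anticomm, ← hb, inv_smul_smul₀ hs]
    rw [he.pauli_mul_pauli, hcross, dotProduct_smul, orth, smul_zero, map_zero, zero_add]
  rw [vectorBivector_apply, map_add, map_smul, add_mul]
  exact congrArg _ (congrArg₂ _ temporal_mul spatial_mul).symm

end IsLorentzFrame

end LorentzFrame

section SpatialVectors

open Matrix

lemma orthogonal_of_cyclic_cross {R : Type*} [CommRing R] [IsDomain R] [CharZero R]
    {s : R} (hs : s ≠ 0) {u E b : Fin 3 → R} (hu : s • u = b ⨯₃ E) (hE : s • E = u ⨯₃ b)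
    (hb : s • b = E ⨯₃ u) (hN : s * s + u ⬝ᵥ u + E ⬝ᵥ E + b ⬝ᵥ b = 4 * (s * s)) :
    u ⬝ᵥ E = 0 ∧ u ⬝ᵥ u = s * s ∧ E ⬝ᵥ E = s * s := by
  have orth : u ⬝ᵥ E = 0 := by
    apply mul_left_cancel₀ hs
    rw [mul_zero, ← smul_eq_mul, ← dotProduct_smul, hE, dot_self_cross]
  have hEu : E ⬝ᵥ E = u ⬝ᵥ u := by
    apply mul_left_cancel₀ hs
    rw [← smul_eq_mul, ← smul_eq_mul, ← dotProduct_smul, ← dotProduct_smul, hE, hu,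
      triple_product_permutation]
  have hbu : b ⬝ᵥ b = u ⬝ᵥ u := by
    apply mul_left_cancel₀ hs
    rw [← smul_eq_mul, ← smul_eq_mul, ← dotProduct_smul, ← dotProduct_smul, hb, hu,
      ← triple_product_permutation]
  have huu : u ⬝ᵥ u = s * s :=
    mul_left_cancel₀ (OfNat.ofNat_ne_zero 3 : (3 : R) ≠ 0) (by linear_combination hN - hEu - hbu)
  exact ⟨orth, huu, hEu.trans huu⟩

lemma eq_zero_of_mul_self_add_dotProduct_self_eq_zero {K : Type*} [CommRing K] [LinearOrder K]
    [IsStrictOrderedRing K] {s : K} {u E b : Fin 3 → K}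
    (h : s * s + u ⬝ᵥ u + E ⬝ᵥ E + b ⬝ᵥ b = 0) : s = 0 ∧ u = 0 ∧ E = 0 ∧ b = 0 := by
  have dotProduct_self_nonneg (p : Fin 3 → K) : 0 ≤ p ⬝ᵥ p :=
    Finset.sum_nonneg fun i _ => mul_self_nonneg (p i)
  have hu := dotProduct_self_nonneg u
  have hE := dotProduct_self_nonneg E
  have hb := dotProduct_self_nonneg b
  have hs := mul_self_nonneg s
  refine ⟨mul_self_eq_zero.1 ?_, dotProduct_self_eq_zero.1 ?_, dotProduct_self_eq_zero.1 ?_,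
    dotProduct_self_eq_zero.1 ?_⟩ <;> linarith

end SpatialVectors

section Classification

open Matrix

variable {K V : Type*} [Field K] [LinearOrder K] [IsStrictOrderedRing K] [Invertible (2 : K)]
  [AddCommGroup V] [Module K V] {Q : QuadraticForm K V} {e : Fin 4 → V}

namespace IsLorentzFrame

lemma eq_zero_or_exists_parabolic (he : IsLorentzFrame Q e)
    (hspan : Submodule.span K (Set.range e) = ⊤) {α : CliffordAlgebra Q}
    (hα : involute (reverse α) = -α)
    (hsandwich : α * ι Q (e 3) * α = (4 * symbolScalar Q (ι Q (e 3) * α)) • α) :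
    α = 0 ∨ ∃ u l : V, u ≠ 0 ∧ Q u = 0 ∧ Q l = 1 ∧ QuadraticMap.associated Q u l = 0 ∧
      α = ι Q u + ι Q u * ι Q l := by
  obtain ⟨s, u, E, b, rfl, hN, hu, hE, hb⟩ := he.exists_vectorBivector_eq hspan hα hsandwich
  rcases eq_or_ne s 0 with rfl | hs
  · left
    obtain ⟨-, rfl, rfl, rfl⟩ := eq_zero_of_mul_self_add_dotProduct_self_eq_zero
      (hN.trans (by rw [mul_zero, mul_zero]))
    exact map_zero _
  · right
    obtain ⟨orth, uu, EE⟩ := orthogonal_of_cyclic_cross hs hu hE hb hN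
    refine ⟨s • e 3 + spatialVector e u, spatialVector e (-s⁻¹ • E), ?_, ?_, ?_, ?_,
      he.vectorBivector_eq_ι_add_ι_mul_ι hs orth hb⟩
    · intro h
      have eq_neg_s := he.associated_smul_three_add_spatialVector s 1 u 0
      rw [h, map_zero, LinearMap.zero_apply, dotProduct_zero, zero_sub, mul_one] at eq_neg_s
      exact hs (neg_eq_zero.1 eq_neg_s.symm)
    · rw [← QuadraticMap.associated_eq_self_apply K, he.associated_smul_three_add_spatialVector,
        uu, sub_self]
    · rw [← QuadraticMap.associated_eq_self_apply K, he.associated_spatialVector, smul_dotProduct,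
        dotProduct_smul, EE, smul_smul, smul_eq_mul]
      field_simp
    · rw [map_add, LinearMap.add_apply, map_smul, LinearMap.smul_apply,
        he.associated_three_spatialVector, smul_zero, zero_add, he.associated_spatialVector,
        dotProduct_smul, orth, smul_zero]

end IsLorentzFrame

theorem stmt_14_general (he : IsLorentzFrame Q e)
    (hspan : Submodule.span K (Set.range e) = ⊤) (α : CliffordAlgebra Q) :
    List.TFAE [
      involute (reverse α) = -α ∧
        α * ι Q (e 3) * α = (4 * symbolScalar Q (ι Q (e 3) * α)) • α,
      involute (reverse α) = -α ∧
        α * α = 0 ∧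
        (∃ u : V, (DirectSum.decompose (fun i : ℕ => ⋀[K]^i V) (equivExterior Q α) 1 :
            ExteriorAlgebra K V) = ExteriorAlgebra.ι K u ∧ α * ι Q u * α = 0) ∧
        ∀ v : V, α * ι Q v * α = (4 * symbolScalar Q (ι Q v * α)) • α,
      α = 0 ∨ ∃ u l : V, u ≠ 0 ∧ Q u = 0 ∧ Q l = 1 ∧ QuadraticMap.associated Q u l = 0 ∧
        α = (equivExterior Q).symm
          (ExteriorAlgebra.ι K u + ExteriorAlgebra.ι K u * ExteriorAlgebra.ι K l)] := by
  tfae_have 2 → 1 := fun ⟨hα, _, _, hsandwich⟩ => ⟨hα, hsandwich (e 3)⟩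
  tfae_have 1 → 3 := by
    rintro ⟨hα, hsandwich⟩
    refine (he.eq_zero_or_exists_parabolic hspan hα hsandwich).imp_right ?_
    rintro ⟨u, l, hne, hu, hl, hul, rfl⟩
    exact ⟨u, l, hne, hu, hl, hul, (equivExterior_symm_ι_add_ι_mul_ι hul).symm⟩
  tfae_have 3 → 2 := by
    rintro (rfl | ⟨u, l, -, hu, hl, hul, rfl⟩)
    · exact ⟨by simp, by simp, ⟨0, by simp⟩, by simp⟩
    · have hsymb := equivExterior_symm_ι_add_ι_mul_ι hul
      rw [hsymb]
      have hortho : Q.IsOrtho u l := QuadraticMap.associated_isOrtho.1 hul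
      have sandwich (v : V) := ι_add_ι_mul_ι_mul_ι_mul_self hu hl hortho v
      refine ⟨involute_reverse_ι_add_ι_mul_ι hortho, ι_add_ι_mul_ι_mul_self hu hortho, ⟨u, ?_, ?_⟩,
        fun v => ?_⟩
      · rw [← hsymb, LinearEquiv.apply_symm_apply, decompose_ι_add_ι_mul_ι_one]
      · rw [sandwich, QuadraticMap.polar_self, hu, smul_zero, mul_zero, zero_smul]
      · rw [sandwich, symbolScalar_ι_mul_ι_add_ι_mul_ι, QuadraticMap.polar_comm,
          polar_eq_two_mul_associated, ← mul_assoc]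
        norm_num
  tfae_finish

end Classification

lemma associated_Qmink : QuadraticMap.associated Qmink = minkB :=
  QuadraticMap.associated_left_inverse ℝ fun x y => by
    simp only [minkB, LinearMap.mk₂_apply]
    ring

lemma isLorentzFrame_Qmink : IsLorentzFrame Qmink (Pi.basisFun ℝ (Fin 4)) := by
  intro i j
  rw [associated_Qmink]
  fin_cases i <;> fin_cases j <;> simp [minkB]

end

/-- a polyform `α` on Minkowski 4-space satisfies `(π∘τ)(α) = -α`,
`α ⋄ α = 0`, `α ⋄ u ⋄ α = 0` for `u = α⁽¹⁾`, and `α ⋄ v ⋄ α = 4 (v ⋄ α)⁽⁰⁾ α`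
for every one-form `v`, iff `α = u + u ∧ l` for a parabolic pair `(u,l)` or `α = 0`. -/
theorem stmt_14 (α : CliffordAlgebra Qmink) :
    (CliffordAlgebra.involute (CliffordAlgebra.reverse α) = -α ∧
        α * α = 0 ∧
        (∃ u : Fin 4 → ℝ, polyProj 1 α = ExteriorAlgebra.ι ℝ u ∧
          α * CliffordAlgebra.ι Qmink u * α = 0) ∧
        ∀ v : Fin 4 → ℝ,
          α * CliffordAlgebra.ι Qmink v * α =
            (4 * scalarPart (CliffordAlgebra.ι Qmink v * α)) • α) ↔
      (α = 0 ∨ ∃ u l : Fin 4 → ℝ, u ≠ 0 ∧ minkB u u = 0 ∧ minkB l l = 1 ∧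
        minkB u l = 0 ∧
        α = cliffToExt.symm
          (ExteriorAlgebra.ι ℝ u + ExteriorAlgebra.ι ℝ u * ExteriorAlgebra.ι ℝ l)) := by
  have h := (stmt_14_general isLorentzFrame_Qmink (Pi.basisFun ℝ (Fin 4)).span_eq α).out 1 2
  rwa [associated_Qmink] at h

end
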